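/- arXiv:2603.26381 — 7 statements merged into one kernel-verified Lean document; each statement's English description precedes it below -/
import Mathlib

section
/- Let (E_k)_{k≥0} be a sequence of nonnegative real numbers with E_1 = E_0, and let a_1, a_2 be real numbers with a_2 ≥ 0, a_1 + a_2 < 1, and at least one of a_1, a_2 positive. If E_{k+1} ≤ a_1 E_k + a_2 E_{k−1} for all k ≥ 1, then for all k ≥ 1 one has E_{k+1} ≤ q^k (1 + ξ) E_0, where q := (a_1 + √(a_1² + 4 a_2))/2 and ξ := q − a_1. -/
/-!
The numbers `q` and `-ξ` are the roots of `x ^ 2 = a₁ * x + a₂`, so `a₁ = q - ξ` and `a₂ = q * ξ`.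
The two-term recurrence inequality is therefore the one-term inequality
`E (k + 2) + ξ * E (k + 1) ≤ q * (E (k + 1) + ξ * E k)`: the combination `E (k + 1) + ξ * E k`
decays geometrically with ratio `q`, and it dominates `E (k + 1)` because `ξ` and `E k` are
nonnegative.
-/

/-- The larger root of the characteristic equation `x ^ 2 = a * x + b` of the recurrence
`u (k + 2) = a * u (k + 1) + b * u k`; it is the `q` of the theorem. It is a root only when
`0 ≤ a ^ 2 + 4 * b`, since `√` is `0` on negative numbers. -/
noncomputable def dominantRoot (a b : ℝ) : ℝ :=
  (a + √(a ^ 2 + 4 * b)) / 2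

section dominantRoot

variable {a b : ℝ}

theorem dominantRoot_mul_dominantRoot_sub (h : 0 ≤ a ^ 2 + 4 * b) :
    dominantRoot a b * (dominantRoot a b - a) = b := by
  have sq_sqrt_discrim : √(a ^ 2 + 4 * b) ^ 2 = a ^ 2 + 4 * b := Real.sq_sqrt h
  unfold dominantRoot
  linear_combination sq_sqrt_discrim / 4

theorem abs_le_sqrt_sq_add_four_mul (hb : 0 ≤ b) : |a| ≤ √(a ^ 2 + 4 * b) :=
  Real.abs_le_sqrt (by linarith)

theorem dominantRoot_nonneg (hb : 0 ≤ b) : 0 ≤ dominantRoot a b := by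
  have : -√(a ^ 2 + 4 * b) ≤ a := neg_le_of_abs_le (abs_le_sqrt_sq_add_four_mul hb)
  unfold dominantRoot
  linarith

theorem le_dominantRoot (hb : 0 ≤ b) : a ≤ dominantRoot a b := by
  have : a ≤ √(a ^ 2 + 4 * b) := le_of_abs_le (abs_le_sqrt_sq_add_four_mul hb)
  unfold dominantRoot
  linarith

end dominantRoot

theorem add_mul_le_pow_mul_of_le_sub_mul_add_mul {u : ℕ → ℝ} {q ξ : ℝ} (hq : 0 ≤ q)
    (hu : ∀ k, u (k + 2) ≤ (q - ξ) * u (k + 1) + q * ξ * u k) (k : ℕ) :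
    u (k + 1) + ξ * u k ≤ q ^ k * (u 1 + ξ * u 0) :=
  le_geom (u := fun k ↦ u (k + 1) + ξ * u k) hq k fun j _ ↦ by linarith [hu j]

theorem stmt0_general {E : ℕ → ℝ} (hE : ∀ k, 0 ≤ E k) {a b : ℝ} (hb : 0 ≤ b)
    (hrec : ∀ k, E (k + 2) ≤ a * E (k + 1) + b * E k) (k : ℕ) :
    E (k + 1) ≤ dominantRoot a b ^ k * (E 1 + (dominantRoot a b - a) * E 0) := by
  set q := dominantRoot a b
  have vieta : q * (q - a) = b := dominantRoot_mul_dominantRoot_sub (by positivity)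
  have factored_rec (j : ℕ) : E (j + 2) ≤ (q - (q - a)) * E (j + 1) + q * (q - a) * E j := by
    rw [sub_sub_cancel, vieta]
    exact hrec j
  calc E (k + 1) ≤ E (k + 1) + (q - a) * E k :=
        le_add_of_nonneg_right (mul_nonneg (sub_nonneg.2 (le_dominantRoot hb)) (hE k))
    _ ≤ q ^ k * (E 1 + (q - a) * E 0) :=
        add_mul_le_pow_mul_of_le_sub_mul_add_mul (dominantRoot_nonneg hb) factored_rec k

/-- Lemma 3.5 (recurrence estimate): if a nonnegative sequence satisfies the
two-term recurrence inequality with `a₂ ≥ 0`, `a₁ + a₂ < 1` and at least one of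
`a₁, a₂` positive, then it decays like `q^k (1 + ξ) E₀`. -/
theorem stmt0 (E : ℕ → ℝ) (hEnonneg : ∀ k, 0 ≤ E k) (hE10 : E 1 = E 0)
    (a1 a2 : ℝ) (ha2 : 0 ≤ a2) (hsum : a1 + a2 < 1) (hpos : 0 < a1 ∨ 0 < a2)
    (hrec : ∀ k, 1 ≤ k → E (k + 1) ≤ a1 * E k + a2 * E (k - 1)) :
    ∀ k, 1 ≤ k →
      E (k + 1) ≤
        ((a1 + Real.sqrt (a1 ^ 2 + 4 * a2)) / 2) ^ k *
          (1 + ((a1 + Real.sqrt (a1 ^ 2 + 4 * a2)) / 2 - a1)) * E 0 := by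
  intro k _
  simpa only [dominantRoot, hE10, mul_assoc, one_add_mul] using
    stmt0_general hEnonneg ha2 (fun j ↦ hrec (j + 1) j.succ_pos) k
end

section
/- Let F : ℝⁿ → ℝᵐ have components F_1,…,F_m each differentiable on an open set containing the closed ball B := {x : ‖x − x₀‖ ≤ δ} (δ > 0), and suppose F satisfies the local tangential cone condition with constant η ∈ [0, 1) on B. Then for every nonempty index set J ⊆ {1,…,m} and all x, x̃ ∈ B: (1/(1+η)) ‖F'_J(x)(x − x̃)‖ ≤ ‖F_J(x) − F_J(x̃)‖ ≤ (1/(1−η)) ‖F'_J(x)(x − x̃)‖, where the norms are Euclidean norms on ℝ^J. -/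
open scoped RealInnerProductSpace

/-!
The cone condition says that, for each component, the derivative increment `b = F_i'(x)(x - y)`
lies within `η ‖a‖` of the true increment `a = F_i(x) - F_i(y)`. The triangle inequality then gives
`(1 - η) ‖a‖ ≤ ‖b‖ ≤ (1 + η) ‖a‖` for each component, and such bounds, having a constant independent
of the component, survive taking Euclidean norms over any finite set of components.
-/

theorem sqrt_sum_sq_le_mul_sqrt_sum_sq {ι : Type*} {J : Finset ι} {a b : ι → ℝ} {c : ℝ}
    (hc : 0 ≤ c) (h : ∀ i ∈ J, |a i| ≤ c * |b i|) :
    √(∑ i ∈ J, a i ^ 2) ≤ c * √(∑ i ∈ J, b i ^ 2) := by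
  have sq_le (i : ι) (hi : i ∈ J) : a i ^ 2 ≤ c ^ 2 * b i ^ 2 := by
    rw [← mul_pow, sq_le_sq, abs_mul, abs_of_nonneg hc]
    exact h i hi
  calc √(∑ i ∈ J, a i ^ 2)
    _ ≤ √(c ^ 2 * ∑ i ∈ J, b i ^ 2) := by
      rw [Finset.mul_sum]
      exact Real.sqrt_le_sqrt (Finset.sum_le_sum sq_le)
    _ = c * √(∑ i ∈ J, b i ^ 2) := by rw [Real.sqrt_mul (sq_nonneg c), Real.sqrt_sq hc]

section TangentialCone

variable {𝕜 E : Type*} [NontriviallyNormedField 𝕜] [NormedAddCommGroup E] [NormedSpace 𝕜 E]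

/-- The tangential cone condition with constant `η` on `s`: the linearization error of `f` is
controlled by the increment of `f` itself. The derivative is passed as a separate argument `f'`;
that `f'` differentiates `f` is not part of the definition. -/
def TangentialConeOn {G : Type*} [NormedAddCommGroup G] [NormedSpace 𝕜 G]
    (f : E → G) (f' : E → E →L[𝕜] G) (η : ℝ) (s : Set E) : Prop :=
  ∀ x ∈ s, ∀ y ∈ s, ‖f x - f y - f' x (x - y)‖ ≤ η * ‖f x - f y‖

namespace TangentialConeOn

variable {G : Type*} [NormedAddCommGroup G] [NormedSpace 𝕜 G]
  {f : E → G} {f' : E → E →L[𝕜] G} {η : ℝ} {s : Set E} {x y : E}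

theorem norm_deriv_apply_le (h : TangentialConeOn f f' η s) (hx : x ∈ s) (hy : y ∈ s) :
    ‖f' x (x - y)‖ ≤ (1 + η) * ‖f x - f y‖ := by
  linarith [h x hx y hy, norm_sub_norm_le (f' x (x - y)) (f x - f y),
    norm_sub_rev (f x - f y) (f' x (x - y))]

theorem norm_image_sub_le (h : TangentialConeOn f f' η s) (hη : η < 1) (hx : x ∈ s) (hy : y ∈ s) :
    ‖f x - f y‖ ≤ 1 / (1 - η) * ‖f' x (x - y)‖ := by
  rw [one_div, le_inv_mul_iff₀ (sub_pos.mpr hη)]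
  linarith [h x hx y hy, norm_sub_norm_le (f x - f y) (f' x (x - y))]

end TangentialConeOn

theorem stmt3_general {ι : Type*} {G : ι → Type*} [∀ i, NormedAddCommGroup (G i)]
    [∀ i, NormedSpace 𝕜 (G i)] {s : Set E} {f : ∀ i, E → G i} {f' : ∀ i, E → E →L[𝕜] G i}
    (_hdiff : ∀ i, ∀ x ∈ s, HasFDerivWithinAt (f i) (f' i x) s x)
    {η : ℝ} (hη0 : 0 ≤ η) (hη1 : η < 1) (hcone : ∀ i, TangentialConeOn (f i) (f' i) η s)
    (J : Finset ι) {x y : E} (hx : x ∈ s) (hy : y ∈ s) :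
    1 / (1 + η) * √(∑ i ∈ J, ‖f' i x (x - y)‖ ^ 2) ≤ √(∑ i ∈ J, ‖f i x - f i y‖ ^ 2) ∧
      √(∑ i ∈ J, ‖f i x - f i y‖ ^ 2) ≤ 1 / (1 - η) * √(∑ i ∈ J, ‖f' i x (x - y)‖ ^ 2) := by
  have one_add_pos : 0 < 1 + η := by positivity
  have one_sub_pos : 0 < 1 - η := sub_pos.mpr hη1
  constructor
  · rw [one_div, inv_mul_le_iff₀ one_add_pos]
    refine sqrt_sum_sq_le_mul_sqrt_sum_sq one_add_pos.le fun i _ => ?_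
    simpa only [abs_norm] using (hcone i).norm_deriv_apply_le hx hy
  · refine sqrt_sum_sq_le_mul_sqrt_sum_sq (one_div_pos.mpr one_sub_pos).le fun i _ => ?_
    simpa only [abs_norm] using (hcone i).norm_image_sub_le hη1 hx hy

end TangentialCone

/-- Under the local tangential cone condition with constant `η ∈ [0,1)` on the
closed ball `B(x₀, δ)`, for every nonempty block `J` and `x, y ∈ B`:
`(1/(1+η)) ‖F'_J(x)(x-y)‖ ≤ ‖F_J(x) - F_J(y)‖ ≤ (1/(1-η)) ‖F'_J(x)(x-y)‖`. -/
theorem stmt3 {n m : ℕ} (x₀ : EuclideanSpace ℝ (Fin n)) (δ : ℝ) (hδ : 0 < δ)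
    (f : Fin m → EuclideanSpace ℝ (Fin n) → ℝ)
    (g : Fin m → EuclideanSpace ℝ (Fin n) → EuclideanSpace ℝ (Fin n))
    (hdiff : ∀ i, ∀ x ∈ Metric.closedBall x₀ δ, HasGradientAt (f i) (g i x) x)
    (η : ℝ) (hη0 : 0 ≤ η) (hη1 : η < 1)
    (hcone : ∀ i, ∀ x ∈ Metric.closedBall x₀ δ, ∀ y ∈ Metric.closedBall x₀ δ,
      |f i x - f i y - ⟪g i x, x - y⟫| ≤ η * |f i x - f i y|)
    (J : Finset (Fin m)) (hJ : J.Nonempty)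
    (x : EuclideanSpace ℝ (Fin n)) (hx : x ∈ Metric.closedBall x₀ δ)
    (y : EuclideanSpace ℝ (Fin n)) (hy : y ∈ Metric.closedBall x₀ δ) :
    (1 / (1 + η)) * Real.sqrt (∑ i ∈ J, ⟪g i x, x - y⟫ ^ 2) ≤
        Real.sqrt (∑ i ∈ J, (f i x - f i y) ^ 2) ∧
      Real.sqrt (∑ i ∈ J, (f i x - f i y) ^ 2) ≤
        (1 / (1 - η)) * Real.sqrt (∑ i ∈ J, ⟪g i x, x - y⟫ ^ 2) := by
  simpa only [Real.norm_eq_abs, sq_abs, InnerProductSpace.toDual_apply_apply] using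
    stmt3_general (fun i x hx => (hdiff i x hx).hasFDerivAt.hasFDerivWithinAt) hη0 hη1 hcone J hx hy
end

section
/- Let F : ℝⁿ → ℝᵐ have components F_1,…,F_m each differentiable on an open set containing the closed ball B := {x : ‖x − x₀‖ ≤ δ} (δ > 0), and suppose F satisfies the local tangential cone condition with constant η ∈ [0, 1) on B. Let x_*, x† ∈ B satisfy F(x_*) = 0 and F(x†) = 0, and suppose x_* − x₀ is orthogonal to the kernel of F'(x_*) (i.e. ⟨x_* − x₀, v⟩ = 0 for every v with F'(x_*)v = 0). Then ‖x† − x₀‖² = ‖x† − x_*‖² + ‖x_* − x₀‖²; in particular, if x† ≠ x_* then ‖x† − x₀‖ > ‖x_* − x₀‖, so x_* is the unique solution of F(x) = 0 in B of minimal distance to x₀ with this orthogonality property. -/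
open scoped RealInnerProductSpace

theorem norm_lt_norm_add_of_inner_eq_zero {𝕜 E : Type*} [RCLike 𝕜] [NormedAddCommGroup E]
    [InnerProductSpace 𝕜 E] {u v : E} (hu : u ≠ 0) (huv : inner 𝕜 u v = 0) : ‖v‖ < ‖u + v‖ := by
  have pythagoras := norm_add_sq_eq_norm_sq_add_norm_sq_of_inner_eq_zero u v huv
  have norm_u_pos : 0 < ‖u‖ := norm_pos_iff.mpr hu
  nlinarith [norm_nonneg (u + v)]

/-- The tangential cone condition with constant `η` on a set `s`, for a map `F` between normed
spaces whose derivative at each point `x` of `s` is `F' x`. It bounds the linearization error of `F`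
by the difference of its values. That `F'` is the derivative is part of the condition. -/
structure TangentialConeOn_s6 {E G : Type*} [NormedAddCommGroup E] [NormedSpace ℝ E]
    [NormedAddCommGroup G] [NormedSpace ℝ G] (F : E → G) (F' : E → E →L[ℝ] G) (η : ℝ)
    (s : Set E) : Prop where
  hasFDerivAt : ∀ x ∈ s, HasFDerivAt F (F' x) x
  norm_sub_sub_le : ∀ x ∈ s, ∀ y ∈ s, ‖F x - F y - F' x (x - y)‖ ≤ η * ‖F x - F y‖

theorem TangentialConeOn_s6.apply_sub_eq_zero {E G : Type*} [NormedAddCommGroup E] [NormedSpace ℝ E]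
    [NormedAddCommGroup G] [NormedSpace ℝ G] {F : E → G} {F' : E → E →L[ℝ] G} {η : ℝ} {s : Set E}
    (hF : TangentialConeOn_s6 F F' η s) {x y : E} (hx : x ∈ s) (hy : y ∈ s) (hxy : F x = F y) :
    F' x (y - x) = 0 := by
  simpa [hxy] using hF.norm_sub_sub_le x hx y hy

theorem stmt6_general {E ι : Type*} {G : ι → Type*} [NormedAddCommGroup E] [InnerProductSpace ℝ E]
    [∀ i, NormedAddCommGroup (G i)] [∀ i, NormedSpace ℝ (G i)] {F : ∀ i, E → G i}
    {F' : ∀ i, E → E →L[ℝ] G i} {η : ℝ} {s : Set E} (hF : ∀ i, TangentialConeOn_s6 (F i) (F' i) η s)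
    {x₀ xstar xdag : E} (hxstar : xstar ∈ s) (hxdag : xdag ∈ s)
    (heq : ∀ i, F i xstar = F i xdag)
    (horth : ∀ v : E, (∀ i, F' i xstar v = 0) → ⟪xstar - x₀, v⟫ = 0) :
    ‖xdag - x₀‖ ^ 2 = ‖xdag - xstar‖ ^ 2 + ‖xstar - x₀‖ ^ 2 ∧
      (xdag ≠ xstar → ‖xstar - x₀‖ < ‖xdag - x₀‖) := by
  have inner_eq_zero : ⟪xdag - xstar, xstar - x₀⟫ = 0 :=
    inner_eq_zero_symm.mp <| horth _ fun i => (hF i).apply_sub_eq_zero hxstar hxdag (heq i)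
  rw [← sub_add_sub_cancel xdag xstar x₀]
  exact ⟨by simpa only [sq] using norm_add_sq_eq_norm_sq_add_norm_sq_real inner_eq_zero,
    fun hne => norm_lt_norm_add_of_inner_eq_zero (sub_ne_zero.mpr hne) inner_eq_zero⟩

/-- If `x⋆` and `x†` are both zeros of `F` in the ball and `x⋆ - x₀` is orthogonal
to the kernel of `F'(x⋆)`, then `‖x† - x₀‖² = ‖x† - x⋆‖² + ‖x⋆ - x₀‖²`; in
particular `x⋆` is the unique zero of minimal distance to `x₀` with this
orthogonality property. -/
theorem stmt6 {n m : ℕ} (x₀ : EuclideanSpace ℝ (Fin n)) (δ : ℝ) (hδ : 0 < δ)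
    (f : Fin m → EuclideanSpace ℝ (Fin n) → ℝ)
    (g : Fin m → EuclideanSpace ℝ (Fin n) → EuclideanSpace ℝ (Fin n))
    (hdiff : ∀ i, ∀ x ∈ Metric.closedBall x₀ δ, HasGradientAt (f i) (g i x) x)
    (η : ℝ) (hη0 : 0 ≤ η) (hη1 : η < 1)
    (hcone : ∀ i, ∀ x ∈ Metric.closedBall x₀ δ, ∀ y ∈ Metric.closedBall x₀ δ,
      |f i x - f i y - ⟪g i x, x - y⟫| ≤ η * |f i x - f i y|)
    (xstar : EuclideanSpace ℝ (Fin n)) (hxstar : xstar ∈ Metric.closedBall x₀ δ)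
    (xdag : EuclideanSpace ℝ (Fin n)) (hxdag : xdag ∈ Metric.closedBall x₀ δ)
    (hFstar : ∀ i, f i xstar = 0) (hFdag : ∀ i, f i xdag = 0)
    (horth : ∀ v : EuclideanSpace ℝ (Fin n),
      (∀ i, ⟪g i xstar, v⟫ = 0) → ⟪xstar - x₀, v⟫ = 0) :
    ‖xdag - x₀‖ ^ 2 = ‖xdag - xstar‖ ^ 2 + ‖xstar - x₀‖ ^ 2 ∧
      (xdag ≠ xstar → ‖xstar - x₀‖ < ‖xdag - x₀‖) :=
  stmt6_general (F' := fun i x => InnerProductSpace.toDual ℝ _ (g i x))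
    (fun i => ⟨fun x hx => (hdiff i x hx).hasFDerivAt, hcone i⟩) hxstar hxdag
    (fun i => (hFstar i).trans (hFdag i).symm) horth
end

section
/- Let F : ℝⁿ → ℝᵐ have components F_1,…,F_m each differentiable on the open ball B° := {x : ‖x − x₀‖ < δ} (δ > 0), suppose F satisfies the local tangential cone condition with constant η ∈ [0, 1) on B°, and suppose there exists x_* ∈ B° with F(x_*) = 0. Then for each i ∈ {1,…,m}: F_i(x) = 0 for all x ∈ B° if and only if there exists x̃ ∈ B° such that ∇F_i(x̃) = 0. -/
open scoped RealInnerProductSpace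

section TangentialCone

variable {𝕜 E G : Type*} [NontriviallyNormedField 𝕜] [NormedAddCommGroup E] [NormedSpace 𝕜 E]
  [NormedAddCommGroup G] [NormedSpace 𝕜 G]
  {f : E → G} {f' : E → E →L[𝕜] G} {s : Set E} {η : ℝ}

/-- The tangential cone condition with constant `η` on `s`, which bounds the linearization error of
`f` by `η` times the increment of `f`. The derivative enters as a family `f'` of linear maps, tied
to `f` by a separate `HasFDerivAt` hypothesis. -/
def TangentialConeConditionOn (f : E → G) (f' : E → E →L[𝕜] G) (s : Set E) (η : ℝ) : Prop :=
  ∀ x ∈ s, ∀ y ∈ s, ‖f x - f y - f' x (x - y)‖ ≤ η * ‖f x - f y‖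

theorem TangentialConeConditionOn.eq_of_deriv_eq_zero (hf : TangentialConeConditionOn f f' s η)
    (hη : η < 1) {x y : E} (hx : x ∈ s) (hy : y ∈ s) (hf'y : f' y = 0) : f x = f y := by
  have increment_le : ‖f y - f x‖ ≤ η * ‖f y - f x‖ := by
    simpa only [hf'y, zero_apply, sub_zero] using hf y hy x hx
  by_contra hne
  have increment_pos : 0 < ‖f y - f x‖ := norm_sub_pos_iff.mpr (Ne.symm hne)
  exact increment_le.not_gt (mul_lt_of_lt_one_left increment_pos hη)

theorem hasFDerivAt_eq_zero_of_eventuallyEq_const {L : E →L[𝕜] G} {x : E} {c : G}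
    (hf : HasFDerivAt f L x) (hc : f =ᶠ[nhds x] fun _ ↦ c) : L = 0 :=
  hf.unique ((hasFDerivAt_const c x).congr_of_eventuallyEq hc)

theorem stmt7_general (hs : IsOpen s) (hdiff : ∀ x ∈ s, HasFDerivAt f (f' x) x) (hη : η < 1)
    (hcone : TangentialConeConditionOn f f' s η) (hsol : ∃ z ∈ s, f z = 0) :
    (∀ x ∈ s, f x = 0) ↔ ∃ y ∈ s, f' y = 0 := by
  obtain ⟨z, hz, hfz⟩ := hsol
  constructor
  · intro hzero
    have eventually_zero : f =ᶠ[nhds z] fun _ ↦ 0 :=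
      Filter.eventually_of_mem (hs.mem_nhds hz) hzero
    exact ⟨z, hz, hasFDerivAt_eq_zero_of_eventuallyEq_const (hdiff z hz) eventually_zero⟩
  · rintro ⟨y, hy, hf'y⟩ x hx
    calc
      f x = f y := hcone.eq_of_deriv_eq_zero hη hx hy hf'y
      _ = f z := (hcone.eq_of_deriv_eq_zero hη hz hy hf'y).symm
      _ = 0 := hfz

end TangentialCone

/-- Under the local tangential cone condition with `η ∈ [0,1)` on the open ball,
assuming a zero of `F` exists in the ball: a component `F_i` vanishes identically
on the ball iff its gradient vanishes at some point of the ball. -/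
theorem stmt7 {n m : ℕ} (x₀ : EuclideanSpace ℝ (Fin n)) (δ : ℝ) (hδ : 0 < δ)
    (f : Fin m → EuclideanSpace ℝ (Fin n) → ℝ)
    (g : Fin m → EuclideanSpace ℝ (Fin n) → EuclideanSpace ℝ (Fin n))
    (hdiff : ∀ i, ∀ x ∈ Metric.ball x₀ δ, HasGradientAt (f i) (g i x) x)
    (η : ℝ) (hη0 : 0 ≤ η) (hη1 : η < 1)
    (hcone : ∀ i, ∀ x ∈ Metric.ball x₀ δ, ∀ y ∈ Metric.ball x₀ δ,
      |f i x - f i y - ⟪g i x, x - y⟫| ≤ η * |f i x - f i y|)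
    (hsol : ∃ xstar ∈ Metric.ball x₀ δ, ∀ i, f i xstar = 0) :
    ∀ i, (∀ x ∈ Metric.ball x₀ δ, f i x = 0) ↔
      ∃ y ∈ Metric.ball x₀ δ, g i y = 0 := by
  intro i
  simpa only [map_eq_zero_iff _ (InnerProductSpace.toDual ℝ _).injective] using
    stmt7_general Metric.isOpen_ball (fun x hx ↦ (hdiff i x hx).hasFDerivAt) hη1 (hcone i)
      (hsol.imp fun _ hz ↦ ⟨hz.1, hz.2 i⟩)
end

section
/- Let G : ℝⁿ → ℝᵐ be differentiable at a point a ∈ ℝⁿ with derivative A := G'(a) (a continuous linear map ℝⁿ → ℝᵐ), let x_* ∈ ℝⁿ satisfy G(x_*) = 0, and let η ∈ [0, 1/2) be such that ‖G(a) − A(a − x_*)‖ ≤ η ‖G(a)‖. Let b ∈ ℝⁿ, set v := a − b and u := A^*(G(a)) (the adjoint of A applied to G(a)), and assume Δ := ‖u‖²‖v‖² − ⟨u, v⟩² > 0. Let β := ⟨v, u⟩ ‖G(a)‖² / Δ and assume β ≥ 0, let s := Δ/(‖u‖²‖v‖²) ∈ (0, 1], let σ := ‖A‖ be the operator norm of A,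 and define x⁺ := a − (‖v‖² ‖G(a)‖² / Δ) u + β v. Then ‖x⁺ − x_*‖² ≤ (1 + 3β + 2β²) ‖a − x_*‖² + (2β² + β) ‖b − x_*‖² − (1 − 2η + (1 − s)/s) · ‖G(a)‖² / (σ² s). -/
open scoped RealInnerProductSpace

/-!
Write `x⁺ = a - w`. The coefficients of `w = α u - β v` are exactly those for which `⟪w, v⟫ = 0` and
`⟪w, u⟫ = ‖r‖²`, where `r` is the residual; hence `‖w‖² = α ‖r‖² = ‖r‖⁴ / (‖u‖² s)`. Expanding
`‖(a - x) - w‖²`, the cone condition bounds `α ⟪u, a - x⟫` below by `(1 - η) ‖w‖²`, which leaves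
`‖a - x‖² + 2 β ⟪v, a - x⟫ - (1 - 2 η) ‖w‖²`. Adding and subtracting
`β² ‖v‖² = ((1 - s) / s) ‖w‖²` produces the `cot²` term, the momentum terms are absorbed by
polarization and `‖v‖² ≤ 2 (‖a - x‖² + ‖b - x‖²)`, and `‖u‖ ≤ ‖A‖ ‖r‖` gives
`‖w‖² ≥ ‖r‖² / (‖A‖² s)`.
-/

section MomentumStep

variable {E : Type*} [NormedAddCommGroup E] [InnerProductSpace ℝ E] {u v : E} {g : ℝ}

/-- The Gram determinant of two vectors, i.e. the squared area of the parallelogram they span. -/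
def gramDet (u v : E) : ℝ := ‖u‖ ^ 2 * ‖v‖ ^ 2 - ⟪u, v⟫ ^ 2

/-- The squared sine of the angle between two vectors, as a rational expression in norms and inner
products; it takes the value `0` if one of the vectors vanishes. -/
noncomputable def sinSq (u v : E) : ℝ := gramDet u v / (‖u‖ ^ 2 * ‖v‖ ^ 2)

/-- The adaptive momentum parameter `β` for the gradient `u`, the previous displacement `v` and the
squared residual norm `g`. -/
noncomputable def momentumCoeff (u v : E) (g : ℝ) : ℝ := ⟪v, u⟫ * g / gramDet u v

/-- The vector subtracted from the current iterate by the momentum method with gradient `u`,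
previous displacement `v` and squared residual norm `g`. -/
noncomputable def momentumStep (u v : E) (g : ℝ) : E :=
  (‖v‖ ^ 2 * g / gramDet u v) • u - momentumCoeff u v g • v

theorem left_ne_zero_of_gramDet_pos (h : 0 < gramDet u v) : u ≠ 0 := by
  rintro rfl
  simp [gramDet] at h

theorem right_ne_zero_of_gramDet_pos (h : 0 < gramDet u v) : v ≠ 0 := by
  rintro rfl
  simp [gramDet] at h

theorem sinSq_pos (h : 0 < gramDet u v) : 0 < sinSq u v := by
  have hu := left_ne_zero_of_gramDet_pos h
  have hv := right_ne_zero_of_gramDet_pos h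
  unfold sinSq
  positivity

theorem sinSq_le_one (u v : E) : sinSq u v ≤ 1 :=
  div_le_one_of_le₀ (sub_le_self _ (sq_nonneg _)) (by positivity)

theorem one_sub_sinSq_div_sinSq (h : 0 < gramDet u v) :
    (1 - sinSq u v) / sinSq u v = ⟪u, v⟫ ^ 2 / gramDet u v := by
  have hu := left_ne_zero_of_gramDet_pos h
  have hv := right_ne_zero_of_gramDet_pos h
  unfold sinSq
  field_simp
  rw [gramDet]
  ring

theorem inner_momentumStep_right (u v : E) (g : ℝ) : ⟪momentumStep u v g, v⟫ = 0 := by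
  rw [momentumStep, momentumCoeff, inner_sub_left, real_inner_smul_left, real_inner_smul_left,
    real_inner_self_eq_norm_sq, real_inner_comm u v]
  ring

theorem inner_momentumStep_left (h : gramDet u v ≠ 0) : ⟪momentumStep u v g, u⟫ = g := by
  rw [momentumStep, momentumCoeff, inner_sub_left, real_inner_smul_left, real_inner_smul_left,
    real_inner_self_eq_norm_sq, real_inner_comm u v]
  field_simp
  rw [gramDet]
  ring

theorem norm_momentumStep_sq (h : gramDet u v ≠ 0) :
    ‖momentumStep u v g‖ ^ 2 = ‖v‖ ^ 2 * g / gramDet u v * g := by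
  rw [← real_inner_self_eq_norm_sq]
  nth_rw 2 [momentumStep]
  rw [inner_sub_right, real_inner_smul_right, real_inner_smul_right, inner_momentumStep_left h,
    inner_momentumStep_right, mul_zero, sub_zero]

theorem norm_momentumStep_sq_eq_div_sinSq (h : 0 < gramDet u v) :
    ‖momentumStep u v g‖ ^ 2 = g ^ 2 / (‖u‖ ^ 2 * sinSq u v) := by
  have hu := left_ne_zero_of_gramDet_pos h
  have hv := right_ne_zero_of_gramDet_pos h
  rw [norm_momentumStep_sq h.ne', sinSq]
  field_simp

theorem momentumCoeff_sq_mul_norm_sq (h : 0 < gramDet u v) :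
    momentumCoeff u v g ^ 2 * ‖v‖ ^ 2 =
      (1 - sinSq u v) / sinSq u v * ‖momentumStep u v g‖ ^ 2 := by
  rw [one_sub_sinSq_div_sinSq h, norm_momentumStep_sq h.ne', momentumCoeff, real_inner_comm u v]
  ring

theorem div_le_norm_momentumStep_sq {c : ℝ} (h : 0 < gramDet u v) (hg : 0 ≤ g)
    (hu : ‖u‖ ^ 2 ≤ c * g) : g / (c * sinSq u v) ≤ ‖momentumStep u v g‖ ^ 2 := by
  have hu0 : 0 < ‖u‖ ^ 2 := by
    have := left_ne_zero_of_gramDet_pos h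
    positivity
  have hc : 0 < c := pos_of_mul_pos_left (hu0.trans_le hu) hg
  have hs := sinSq_pos h
  rw [norm_momentumStep_sq_eq_div_sinSq h, div_le_div_iff₀ (by positivity) (by positivity)]
  calc g * (‖u‖ ^ 2 * sinSq u v) ≤ g * (c * g * sinSq u v) := by gcongr
    _ = g ^ 2 * (c * sinSq u v) := by ring

theorem norm_sub_momentumStep_sq_le {e : E} {η : ℝ} (h : 0 < gramDet u v) (hg : 0 ≤ g)
    (hue : (1 - η) * g ≤ ⟪u, e⟫) :
    ‖e - momentumStep u v g‖ ^ 2 ≤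
      ‖e‖ ^ 2 + 2 * momentumCoeff u v g * ⟪v, e⟫ - (1 - 2 * η) * ‖momentumStep u v g‖ ^ 2 := by
  have hinner : (1 - η) * ‖momentumStep u v g‖ ^ 2 - momentumCoeff u v g * ⟪v, e⟫ ≤
      ⟪momentumStep u v g, e⟫ := by
    rw [norm_momentumStep_sq h.ne', momentumStep, inner_sub_left, real_inner_smul_left,
      real_inner_smul_left]
    refine sub_le_sub_right ?_ _
    calc (1 - η) * (‖v‖ ^ 2 * g / gramDet u v * g)
        = ‖v‖ ^ 2 * g / gramDet u v * ((1 - η) * g) := by ring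
      _ ≤ ‖v‖ ^ 2 * g / gramDet u v * ⟪u, e⟫ := by gcongr
  rw [norm_sub_sq_real, real_inner_comm]
  linarith

end MomentumStep

section Polarization

theorem norm_sub_sq_le_two_mul {E : Type*} [SeminormedAddCommGroup E] (a b x : E) :
    ‖a - b‖ ^ 2 ≤ 2 * (‖a - x‖ ^ 2 + ‖b - x‖ ^ 2) :=
  calc ‖a - b‖ ^ 2 ≤ (‖a - x‖ + ‖b - x‖) ^ 2 := by
        gcongr
        rw [norm_sub_rev b x]
        exact norm_sub_le_norm_sub_add_norm_sub a x b
    _ ≤ 2 * (‖a - x‖ ^ 2 + ‖b - x‖ ^ 2) := add_sq_le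

variable {E : Type*} [SeminormedAddCommGroup E] [InnerProductSpace ℝ E]

theorem two_mul_inner_sub_sub (a b x : E) :
    2 * ⟪a - b, a - x⟫ = ‖a - x‖ ^ 2 + ‖a - b‖ ^ 2 - ‖b - x‖ ^ 2 := by
  have h := norm_sub_sq_real (a - x) (a - b)
  rw [sub_sub_sub_cancel_left, real_inner_comm] at h
  linarith

theorem two_mul_inner_add_sq_mul_norm_sq_le {β : ℝ} (hβ : 0 ≤ β) (a b x : E) :
    2 * β * ⟪a - b, a - x⟫ + β ^ 2 * ‖a - b‖ ^ 2 ≤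
      (3 * β + 2 * β ^ 2) * ‖a - x‖ ^ 2 + (2 * β ^ 2 + β) * ‖b - x‖ ^ 2 :=
  calc 2 * β * ⟪a - b, a - x⟫ + β ^ 2 * ‖a - b‖ ^ 2
      = β * (‖a - x‖ ^ 2 - ‖b - x‖ ^ 2) + (β + β ^ 2) * ‖a - b‖ ^ 2 := by
        linear_combination β * two_mul_inner_sub_sub a b x
    _ ≤ β * (‖a - x‖ ^ 2 - ‖b - x‖ ^ 2) +
          (β + β ^ 2) * (2 * (‖a - x‖ ^ 2 + ‖b - x‖ ^ 2)) := by
        gcongr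
        exact norm_sub_sq_le_two_mul a b x
    _ = (3 * β + 2 * β ^ 2) * ‖a - x‖ ^ 2 + (2 * β ^ 2 + β) * ‖b - x‖ ^ 2 := by ring

end Polarization

section Hilbert

variable {E F : Type*} [NormedAddCommGroup E] [InnerProductSpace ℝ E] [CompleteSpace E]
  [NormedAddCommGroup F] [InnerProductSpace ℝ F] [CompleteSpace F]

theorem norm_adjoint_apply_sq_le (A : E →L[ℝ] F) (r : F) :
    ‖ContinuousLinearMap.adjoint A r‖ ^ 2 ≤ ‖A‖ ^ 2 * ‖r‖ ^ 2 := by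
  rw [← mul_pow, ← LinearIsometryEquiv.norm_map ContinuousLinearMap.adjoint A]
  gcongr
  exact ContinuousLinearMap.le_opNorm _ r

theorem one_sub_mul_norm_sq_le_inner_adjoint {A : E →L[ℝ] F} {r : F} {e : E} {η : ℝ}
    (h : ‖r - A e‖ ≤ η * ‖r‖) :
    (1 - η) * ‖r‖ ^ 2 ≤ ⟪ContinuousLinearMap.adjoint A r, e⟫ := by
  have hcs : ⟪r, r - A e⟫ ≤ ‖r‖ * (η * ‖r‖) :=
    (real_inner_le_norm _ _).trans (by gcongr)
  rw [inner_sub_right, real_inner_self_eq_norm_sq] at hcs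
  rw [ContinuousLinearMap.adjoint_inner_left]
  linarith

theorem stmt10_general (A : E →L[ℝ] F) (r : F) (a b x u v : E) (η β s : ℝ)
    (hcone : ‖r - A (a - x)‖ ≤ η * ‖r‖)
    (hu : u = ContinuousLinearMap.adjoint A r) (hv : v = a - b) (hΔ : 0 < gramDet u v)
    (hβdef : β = momentumCoeff u v (‖r‖ ^ 2)) (hβ : 0 ≤ β)
    (hs : s = sinSq u v) (hη : 2 * η * s ≤ 1) :
    ‖a - momentumStep u v (‖r‖ ^ 2) - x‖ ^ 2 ≤
      (1 + 3 * β + 2 * β ^ 2) * ‖a - x‖ ^ 2 + (2 * β ^ 2 + β) * ‖b - x‖ ^ 2 -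
        (1 - 2 * η + (1 - s) / s) * ‖r‖ ^ 2 / (‖A‖ ^ 2 * s) := by
  set w := momentumStep u v (‖r‖ ^ 2)
  have hspos : 0 < s := hs ▸ sinSq_pos hΔ
  have hcoeff : 0 ≤ 1 - 2 * η + (1 - s) / s := by
    have : 1 - 2 * η + (1 - s) / s = (1 - 2 * η * s) / s := by field_simp; ring
    rw [this]
    exact div_nonneg (sub_nonneg.2 hη) hspos.le
  have hdescent : ‖a - w - x‖ ^ 2 ≤
      ‖a - x‖ ^ 2 + 2 * β * ⟪v, a - x⟫ - (1 - 2 * η) * ‖w‖ ^ 2 := by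
    rw [sub_right_comm, hβdef]
    exact norm_sub_momentumStep_sq_le hΔ (sq_nonneg _)
      (hu ▸ one_sub_mul_norm_sq_le_inner_adjoint hcone)
  have hcot : β ^ 2 * ‖v‖ ^ 2 = (1 - s) / s * ‖w‖ ^ 2 := by
    rw [hβdef, hs, momentumCoeff_sq_mul_norm_sq hΔ]
  have hmomentum := two_mul_inner_add_sq_mul_norm_sq_le hβ a b x
  rw [← hv] at hmomentum
  have hstep : ‖r‖ ^ 2 / (‖A‖ ^ 2 * s) ≤ ‖w‖ ^ 2 := hs ▸
    div_le_norm_momentumStep_sq hΔ (sq_nonneg _) (hu ▸ norm_adjoint_apply_sq_le A r)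
  calc ‖a - w - x‖ ^ 2
      ≤ ‖a - x‖ ^ 2 + 2 * β * ⟪v, a - x⟫ - (1 - 2 * η) * ‖w‖ ^ 2 := hdescent
    _ = ‖a - x‖ ^ 2 + (2 * β * ⟪v, a - x⟫ + β ^ 2 * ‖v‖ ^ 2) -
          (1 - 2 * η + (1 - s) / s) * ‖w‖ ^ 2 := by rw [hcot]; ring
    _ ≤ ‖a - x‖ ^ 2 + ((3 * β + 2 * β ^ 2) * ‖a - x‖ ^ 2 + (2 * β ^ 2 + β) * ‖b - x‖ ^ 2) -
          (1 - 2 * η + (1 - s) / s) * (‖r‖ ^ 2 / (‖A‖ ^ 2 * s)) := by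
        gcongr _ + ?_ - _ * ?_
    _ = (1 + 3 * β + 2 * β ^ 2) * ‖a - x‖ ^ 2 + (2 * β ^ 2 + β) * ‖b - x‖ ^ 2 -
          (1 - 2 * η + (1 - s) / s) * ‖r‖ ^ 2 / (‖A‖ ^ 2 * s) := by ring

end Hilbert

/-- One-step error estimate for the average block nonlinear Kaczmarz iterate with
adaptive momentum (Lemma 3.7 of the paper). -/
theorem stmt10 {n m : ℕ}
    (G : EuclideanSpace ℝ (Fin n) → EuclideanSpace ℝ (Fin m))
    (a : EuclideanSpace ℝ (Fin n))
    (A : EuclideanSpace ℝ (Fin n) →L[ℝ] EuclideanSpace ℝ (Fin m))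
    (hA : HasFDerivAt G A a)
    (xstar : EuclideanSpace ℝ (Fin n)) (hxstar : G xstar = 0)
    (η : ℝ) (hη0 : 0 ≤ η) (hη : η < 1 / 2)
    (hcone : ‖G a - A (a - xstar)‖ ≤ η * ‖G a‖)
    (b : EuclideanSpace ℝ (Fin n))
    (v u : EuclideanSpace ℝ (Fin n))
    (hv : v = a - b) (hu : u = ContinuousLinearMap.adjoint A (G a))
    (Δ : ℝ) (hΔdef : Δ = ‖u‖ ^ 2 * ‖v‖ ^ 2 - ⟪u, v⟫ ^ 2) (hΔ : 0 < Δ)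
    (β : ℝ) (hβdef : β = ⟪v, u⟫ * ‖G a‖ ^ 2 / Δ) (hβ : 0 ≤ β)
    (s : ℝ) (hs : s = Δ / (‖u‖ ^ 2 * ‖v‖ ^ 2))
    (σ : ℝ) (hσ : σ = ‖A‖)
    (xplus : EuclideanSpace ℝ (Fin n))
    (hxplus : xplus = a - (‖v‖ ^ 2 * ‖G a‖ ^ 2 / Δ) • u + β • v) :
    ‖xplus - xstar‖ ^ 2 ≤
      (1 + 3 * β + 2 * β ^ 2) * ‖a - xstar‖ ^ 2 +
        (2 * β ^ 2 + β) * ‖b - xstar‖ ^ 2 -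
        (1 - 2 * η + (1 - s) / s) * ‖G a‖ ^ 2 / (σ ^ 2 * s) := by
  subst hΔdef hs hσ
  rw [hxplus, sub_add, hβdef]
  exact stmt10_general A (G a) a b xstar u v η _ _ hcone hu hv hΔ rfl (hβdef ▸ hβ) rfl
    (mul_le_one₀ (by linarith) (sinSq_pos hΔ).le (sinSq_le_one u v))
end

section
/- Let η ∈ (0, 1/2) and γ ∈ (0, 1]. Let K ≥ 1 satisfy both K² < (1 − 2ηγ)(1 + η²)/((1 − 2η² − 4η³) γ²) and K² < (1 − 2ηγ + (1 − 2η)γ²)/((1 + η²) γ²). Define c := (1 − 2ηγ)/((1 + η²) K² γ²), b₃ := 1 − (1 − 2η)/((1 + η²) K²), and let β_max satisfy 0 < β_max < (√((4 − 3b₃)² + 8(2 − b₃)(1 − b₃)(c − b₃)) − (4 − 3b₃))/(4(2 − b₃)). Define b₁ := 1 + 3β_max + 2β_max² − c, b₂ := 2β_max² + β_max, q := (b₁ + √(b₁² + 4 b₂))/2 and ξ := q − b₁, and assume additionally b₁ ≥ 0. Then c > b₃, 0 < b₃ < 1, ξ ≥ 0, and b₃ + ξ < 1. -/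
/-!
Both `q` and the bound on `βmax` are larger roots of quadratics, and the two quadratics are linked:
writing `d = 1 - b₃`, one has
`d² - b₁ d - b₂ = d (c - b₃) - (2 (2 - b₃) βmax² + (4 - 3 b₃) βmax)`.
The bound on `βmax` says that the right-hand side is positive, and positivity of the left-hand side
says that `q < d`. As `b₁ ≥ 0`, the shift `ξ = q - b₁` is at most `q`, so `b₃ + ξ ≤ b₃ + q < 1`.
-/

section UpperRoot

variable {a b c t : ℝ}

/-- The larger root of `a X ^ 2 + b X - c` for `0 < a`. The constant term carries a minus sign so
that the root is nonnegative when `c` is. -/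
noncomputable def upperRoot (a b c : ℝ) : ℝ :=
  (√(b ^ 2 + 4 * a * c) - b) / (2 * a)

theorem lt_upperRoot_iff (ha : 0 < a) (ht : 0 ≤ 2 * a * t + b) :
    t < upperRoot a b c ↔ a * t ^ 2 + b * t < c := by
  rw [upperRoot, lt_div_iff₀ (by positivity), lt_sub_iff_add_lt, mul_comm t, Real.lt_sqrt ht,
    ← sub_pos, ← sub_pos (b := a * t ^ 2 + b * t),
    show b ^ 2 + 4 * a * c - (2 * a * t + b) ^ 2 = 4 * a * (c - (a * t ^ 2 + b * t)) by ring]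
  exact mul_pos_iff_of_pos_left (by positivity)

theorem upperRoot_lt_iff (ha : 0 < a) (ht : 0 < 2 * a * t + b) :
    upperRoot a b c < t ↔ c < a * t ^ 2 + b * t := by
  rw [upperRoot, div_lt_iff₀ (by positivity), sub_lt_iff_lt_add, mul_comm t, Real.sqrt_lt' ht,
    ← sub_pos, ← sub_pos (b := c),
    show (2 * a * t + b) ^ 2 - (b ^ 2 + 4 * a * c) = 4 * a * (a * t ^ 2 + b * t - c) by ring]
  exact mul_pos_iff_of_pos_left (by positivity)

theorem le_upperRoot (ha : 0 < a) (h : a * t ^ 2 + b * t ≤ c) : t ≤ upperRoot a b c := by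
  rw [upperRoot, le_div_iff₀ (by positivity), le_sub_iff_add_le]
  apply Real.le_sqrt_of_sq_le
  calc (t * (2 * a) + b) ^ 2 = b ^ 2 + 4 * a * (a * t ^ 2 + b * t) := by ring
    _ ≤ b ^ 2 + 4 * a * c := by gcongr

end UpperRoot

section ContractionFactor

variable {η γ K : ℝ}

/-- The per-step contraction factor `b₃` of the momentum-free step. -/
noncomputable def contractionFactor (η K : ℝ) : ℝ :=
  1 - (1 - 2 * η) / ((1 + η ^ 2) * K ^ 2)

theorem contractionFactor_pos (hη : 0 < η) (hK : 1 ≤ K ^ 2) : 0 < contractionFactor η K := by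
  rw [contractionFactor, sub_pos, div_lt_one (by positivity)]
  calc 1 - 2 * η < 1 + η ^ 2 := by linarith [sq_nonneg η]
    _ ≤ (1 + η ^ 2) * K ^ 2 := le_mul_of_one_le_right (by positivity) hK

theorem contractionFactor_lt_one (hη : η < 1 / 2) (hK : K ≠ 0) : contractionFactor η K < 1 :=
  sub_lt_self _ (div_pos (by linarith) (by positivity))

theorem contractionFactor_lt_iff (hγ : γ ≠ 0) (hK : K ≠ 0) :
    contractionFactor η K < (1 - 2 * η * γ) / ((1 + η ^ 2) * K ^ 2 * γ ^ 2) ↔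
      K ^ 2 < (1 - 2 * η * γ + (1 - 2 * η) * γ ^ 2) / ((1 + η ^ 2) * γ ^ 2) := by
  have add_fractions :
      (1 - 2 * η * γ) / ((1 + η ^ 2) * K ^ 2 * γ ^ 2) + (1 - 2 * η) / ((1 + η ^ 2) * K ^ 2) =
        (1 - 2 * η * γ + (1 - 2 * η) * γ ^ 2) / ((1 + η ^ 2) * γ ^ 2) / K ^ 2 := by
    field_simp
  rw [contractionFactor, sub_lt_iff_lt_add, add_fractions, one_lt_div (by positivity)]

end ContractionFactor

section Momentum

variable {b c β : ℝ}

/-- The rate `q` of the momentum step with momentum parameter `β`: the larger root of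
`X ^ 2 - b₁ X - b₂` with `b₁ = 1 + 3 β + 2 β ^ 2 - c` and `b₂ = 2 β ^ 2 + β`. -/
noncomputable def momentumRate (c β : ℝ) : ℝ :=
  upperRoot 1 (-(1 + 3 * β + 2 * β ^ 2 - c)) (2 * β ^ 2 + β)

theorem le_momentumRate (hβ : 0 ≤ β) : 1 + 3 * β + 2 * β ^ 2 - c ≤ momentumRate c β := by
  apply le_upperRoot one_pos
  calc 1 * (1 + 3 * β + 2 * β ^ 2 - c) ^ 2
        + -(1 + 3 * β + 2 * β ^ 2 - c) * (1 + 3 * β + 2 * β ^ 2 - c) = 0 := by ring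
    _ ≤ 2 * β ^ 2 + β := by positivity

theorem momentumRate_lt_one_sub (hb : b < 1) (hβ : 0 ≤ β)
    (hβ_lt : β < upperRoot (2 * (2 - b)) (4 - 3 * b) ((1 - b) * (c - b))) :
    momentumRate c β < 1 - b := by
  have leading_pos : 0 < 2 * (2 - b) := by linarith
  have deriv_nonneg : 0 ≤ 2 * (2 * (2 - b)) * β + (4 - 3 * b) := by
    have : 0 ≤ 2 * (2 * (2 - b)) * β := by positivity
    linarith
  have quadratic_lt : 2 * (2 - b) * β ^ 2 + (4 - 3 * b) * β < (1 - b) * (c - b) :=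
    (lt_upperRoot_iff leading_pos deriv_nonneg).1 hβ_lt
  have const_lt : 2 * β ^ 2 + β < (1 - b) * (1 - b - (1 + 3 * β + 2 * β ^ 2 - c)) := by
    linarith
  have root_gap_pos : 0 < 1 - b - (1 + 3 * β + 2 * β ^ 2 - c) :=
    pos_of_mul_pos_right (lt_of_le_of_lt (by positivity) const_lt) (by linarith)
  exact (upperRoot_lt_iff one_pos (by linarith)).2 (by linarith)

end Momentum

theorem stmt13_general (η γ K : ℝ) (hη0 : 0 < η) (hη : η < 1 / 2)
    (hγ : γ ≠ 0) (hK_sq : 1 ≤ K ^ 2)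
    (hK2 : K ^ 2 < (1 - 2 * η * γ + (1 - 2 * η) * γ ^ 2) / ((1 + η ^ 2) * γ ^ 2))
    (c b3 : ℝ) (hc : c = (1 - 2 * η * γ) / ((1 + η ^ 2) * K ^ 2 * γ ^ 2))
    (hb3 : b3 = 1 - (1 - 2 * η) / ((1 + η ^ 2) * K ^ 2))
    (βmax : ℝ) (hβ0 : 0 ≤ βmax)
    (hβ : βmax <
      (Real.sqrt ((4 - 3 * b3) ^ 2 + 8 * (2 - b3) * (1 - b3) * (c - b3))
          - (4 - 3 * b3)) / (4 * (2 - b3)))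
    (b1 b2 q ξ : ℝ)
    (hb1 : b1 = 1 + 3 * βmax + 2 * βmax ^ 2 - c)
    (hb2 : b2 = 2 * βmax ^ 2 + βmax)
    (hq : q = (b1 + Real.sqrt (b1 ^ 2 + 4 * b2)) / 2)
    (hξ : ξ = q - b1) (hb1nonneg : 0 ≤ b1) :
    b3 < c ∧ 0 < b3 ∧ b3 < 1 ∧ 0 ≤ ξ ∧ b3 + ξ < 1 := by
  have hK : K ≠ 0 := by
    rintro rfl
    norm_num at hK_sq
  have b3_eq : b3 = contractionFactor η K := hb3
  have q_eq : q = momentumRate c βmax := by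
    rw [hq, hb1, hb2, momentumRate, upperRoot]
    ring_nf
  have b3_lt_one : b3 < 1 := b3_eq ▸ contractionFactor_lt_one hη hK
  have b1_le_q : b1 ≤ q := by
    rw [hb1, q_eq]
    exact le_momentumRate hβ0
  have q_lt : q < 1 - b3 := by
    rw [q_eq]
    refine momentumRate_lt_one_sub b3_lt_one hβ0 (hβ.trans_eq ?_)
    rw [upperRoot]
    ring_nf
  refine ⟨?_, b3_eq ▸ contractionFactor_pos hη0 hK_sq, b3_lt_one, by linarith, by linarith⟩
  rw [b3_eq, hc]
  exact (contractionFactor_lt_iff hγ hK).2 hK2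

/-- Arithmetic facts on the constants of Theorem 3.2: `c > b₃`, `0 < b₃ < 1`,
`ξ ≥ 0` and `b₃ + ξ < 1`. -/
theorem stmt13 (η γ K : ℝ) (hη0 : 0 < η) (hη : η < 1 / 2)
    (hγ0 : 0 < γ) (hγ1 : γ ≤ 1) (hK1 : 1 ≤ K)
    (hK2 : K ^ 2 < (1 - 2 * η * γ) * (1 + η ^ 2) / ((1 - 2 * η ^ 2 - 4 * η ^ 3) * γ ^ 2))
    (hK2' : K ^ 2 < (1 - 2 * η * γ + (1 - 2 * η) * γ ^ 2) / ((1 + η ^ 2) * γ ^ 2))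
    (c b3 : ℝ) (hc : c = (1 - 2 * η * γ) / ((1 + η ^ 2) * K ^ 2 * γ ^ 2))
    (hb3 : b3 = 1 - (1 - 2 * η) / ((1 + η ^ 2) * K ^ 2))
    (βmax : ℝ) (hβ0 : 0 < βmax)
    (hβ : βmax <
      (Real.sqrt ((4 - 3 * b3) ^ 2 + 8 * (2 - b3) * (1 - b3) * (c - b3))
          - (4 - 3 * b3)) / (4 * (2 - b3)))
    (b1 b2 q ξ : ℝ)
    (hb1 : b1 = 1 + 3 * βmax + 2 * βmax ^ 2 - c)
    (hb2 : b2 = 2 * βmax ^ 2 + βmax)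
    (hq : q = (b1 + Real.sqrt (b1 ^ 2 + 4 * b2)) / 2)
    (hξ : ξ = q - b1) (hb1nonneg : 0 ≤ b1) :
    b3 < c ∧ 0 < b3 ∧ b3 < 1 ∧ 0 ≤ ξ ∧ b3 + ξ < 1 := by
  exact stmt13_general η γ K hη0 hη hγ0.ne' (one_le_pow₀ hK1) hK2' c b3 hc hb3 βmax hβ0.le hβ
    b1 b2 q ξ hb1 hb2 hq hξ hb1nonneg
end

section
/- Let G : ℝⁿ → ℝᵐ be differentiable at a ∈ ℝⁿ with derivative A := G'(a), let x_* ∈ ℝⁿ satisfy G(x_*) = 0, let η ∈ [0, 1/2), K ≥ 1, and σ := ‖A‖ (operator norm). Assume: ‖G(a) − A(a − x_*)‖ ≤ η ‖G(a)‖; ‖G(a)‖² ≥ ‖A(a − x_*)‖²/(1 + η²); ‖A(a − x_*)‖² ≥ (σ²/K²) ‖a − x_*‖²; and u := A^*(G(a)) ≠ 0. Define x⁺ := a − (‖G(a)‖²/‖u‖²) u. Then ‖x⁺ − x_*‖² ≤ (1 − (1 − 2η)/((1 + η²) K²)) ‖a − x_*‖². -/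
open scoped RealInnerProductSpace

/-!
Write `e = a - x⋆` and `u = A† r`. The cone condition says that the residual `r` is close to `A e`,
so `⟪u, e⟫ = ⟪r, A e⟫ ≥ (1 - η) ‖r‖²`. With step length `‖r‖² / ‖u‖²` the expansion of
`‖e - (‖r‖² / ‖u‖²) • u‖²` therefore loses at least `(1 - 2η) ‖r‖⁴ / ‖u‖²`, and
`‖u‖ ≤ ‖A‖ ‖r‖` turns a lower bound of `‖r‖²` by a multiple of `‖A‖² ‖e‖²` into one of this loss
by the same multiple of `‖e‖²`.
-/

section InnerProductSpace

variable {E : Type*} [NormedAddCommGroup E] [InnerProductSpace ℝ E]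

theorem one_sub_mul_norm_sq_le_inner {r y : E} {η : ℝ} (h : ‖r - y‖ ≤ η * ‖r‖) :
    (1 - η) * ‖r‖ ^ 2 ≤ ⟪r, y⟫ := by
  have inner_error : ⟪r, r - y⟫ ≤ η * ‖r‖ ^ 2 := calc
    ⟪r, r - y⟫ ≤ ‖r‖ * ‖r - y‖ := real_inner_le_norm _ _
    _ ≤ ‖r‖ * (η * ‖r‖) := by gcongr
    _ = η * ‖r‖ ^ 2 := by ring
  rw [inner_sub_right, real_inner_self_eq_norm_sq] at inner_error
  linarith

theorem norm_sub_div_norm_sq_smul_sq (e u : E) (c : ℝ) :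
    ‖e - (c / ‖u‖ ^ 2) • u‖ ^ 2 = ‖e‖ ^ 2 - 2 * (c / ‖u‖ ^ 2 * ⟪u, e⟫) + c ^ 2 / ‖u‖ ^ 2 := by
  rw [norm_sub_sq_real, real_inner_smul_right, real_inner_comm, norm_smul, mul_pow,
    Real.norm_eq_abs, sq_abs]
  rcases eq_or_ne u 0 with rfl | hu
  · simp
  · field_simp

theorem norm_sub_div_norm_sq_smul_sq_le {e u : E} {c η : ℝ} (hc : 0 ≤ c)
    (h : (1 - η) * c ≤ ⟪u, e⟫) :
    ‖e - (c / ‖u‖ ^ 2) • u‖ ^ 2 ≤ ‖e‖ ^ 2 - (1 - 2 * η) * (c ^ 2 / ‖u‖ ^ 2) := calc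
  ‖e - (c / ‖u‖ ^ 2) • u‖ ^ 2
  _ = ‖e‖ ^ 2 - 2 * (c / ‖u‖ ^ 2 * ⟪u, e⟫) + c ^ 2 / ‖u‖ ^ 2 :=
    norm_sub_div_norm_sq_smul_sq e u c
  _ ≤ ‖e‖ ^ 2 - 2 * (c / ‖u‖ ^ 2 * ((1 - η) * c)) + c ^ 2 / ‖u‖ ^ 2 := by gcongr
  _ = ‖e‖ ^ 2 - (1 - 2 * η) * (c ^ 2 / ‖u‖ ^ 2) := by ring

end InnerProductSpace

section HilbertSpace

variable {E F : Type*} [NormedAddCommGroup E] [InnerProductSpace ℝ E] [CompleteSpace E]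
  [NormedAddCommGroup F] [InnerProductSpace ℝ F] [CompleteSpace F]

open ContinuousLinearMap (adjoint)

/-- The extrapolated gradient step from `a` for the residual `r` and the linearization `A`: it moves
along `-A† r` with adaptive step length `‖r‖² / ‖A† r‖²`. When `A† r = 0` the division by zero makes
it stay at `a`. -/
noncomputable def extrapolatedStep (A : E →L[ℝ] F) (r : F) (a : E) : E :=
  a - (‖r‖ ^ 2 / ‖adjoint A r‖ ^ 2) • adjoint A r

theorem norm_adjoint_apply_le (A : E →L[ℝ] F) (r : F) : ‖adjoint A r‖ ≤ ‖A‖ * ‖r‖ :=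
  (adjoint A).le_of_opNorm_le (adjoint.norm_map A).le r

theorem norm_extrapolatedStep_sub_sq_le {A : E →L[ℝ] F} {r : F} {a x : E} {η : ℝ}
    (hcone : ‖r - A (a - x)‖ ≤ η * ‖r‖) :
    ‖extrapolatedStep A r a - x‖ ^ 2 ≤
      ‖a - x‖ ^ 2 - (1 - 2 * η) * ((‖r‖ ^ 2) ^ 2 / ‖adjoint A r‖ ^ 2) := by
  rw [extrapolatedStep, sub_right_comm]
  apply norm_sub_div_norm_sq_smul_sq_le (sq_nonneg ‖r‖)
  rw [ContinuousLinearMap.adjoint_inner_left]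
  exact one_sub_mul_norm_sq_le_inner hcone

theorem mul_norm_sq_le_norm_pow_div_norm_adjoint_sq {A : E →L[ℝ] F} {r : F} {e : E} {δ : ℝ}
    (hδ : 0 ≤ δ) (hr : δ * (‖A‖ ^ 2 * ‖e‖ ^ 2) ≤ ‖r‖ ^ 2) (hu : adjoint A r ≠ 0) :
    δ * ‖e‖ ^ 2 ≤ (‖r‖ ^ 2) ^ 2 / ‖adjoint A r‖ ^ 2 := by
  rw [le_div_iff₀ (by positivity)]
  calc δ * ‖e‖ ^ 2 * ‖adjoint A r‖ ^ 2
    _ ≤ δ * ‖e‖ ^ 2 * (‖A‖ * ‖r‖) ^ 2 := by gcongr; exact norm_adjoint_apply_le A r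
    _ = δ * (‖A‖ ^ 2 * ‖e‖ ^ 2) * ‖r‖ ^ 2 := by ring
    _ ≤ ‖r‖ ^ 2 * ‖r‖ ^ 2 := by gcongr
    _ = (‖r‖ ^ 2) ^ 2 := by ring

theorem stmt14_general {A : E →L[ℝ] F} {r : F} {a x : E} {η δ : ℝ} (hη : η ≤ 1 / 2) (hδ : 0 ≤ δ)
    (hcone : ‖r - A (a - x)‖ ≤ η * ‖r‖)
    (hr : δ * (‖A‖ ^ 2 * ‖a - x‖ ^ 2) ≤ ‖r‖ ^ 2)
    (hu : adjoint A r ≠ 0) :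
    ‖extrapolatedStep A r a - x‖ ^ 2 ≤ (1 - (1 - 2 * η) * δ) * ‖a - x‖ ^ 2 := by
  have hη' : 0 ≤ 1 - 2 * η := by linarith
  calc ‖extrapolatedStep A r a - x‖ ^ 2
    _ ≤ ‖a - x‖ ^ 2 - (1 - 2 * η) * ((‖r‖ ^ 2) ^ 2 / ‖adjoint A r‖ ^ 2) :=
      norm_extrapolatedStep_sub_sq_le hcone
    _ ≤ ‖a - x‖ ^ 2 - (1 - 2 * η) * (δ * ‖a - x‖ ^ 2) := by
      gcongr
      exact mul_norm_sq_le_norm_pow_div_norm_adjoint_sq hδ hr hu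
    _ = (1 - (1 - 2 * η) * δ) * ‖a - x‖ ^ 2 := by ring

end HilbertSpace

/-- One-step contraction of the momentum-free average block nonlinear Kaczmarz
step with adaptive (extrapolated) step size (ABNK2):
`‖x⁺ - x⋆‖² ≤ (1 - (1 - 2η)/((1 + η²) K²)) ‖a - x⋆‖²`. -/
theorem stmt14 {n m : ℕ}
    (G : EuclideanSpace ℝ (Fin n) → EuclideanSpace ℝ (Fin m))
    (a : EuclideanSpace ℝ (Fin n))
    (A : EuclideanSpace ℝ (Fin n) →L[ℝ] EuclideanSpace ℝ (Fin m))
    (hA : HasFDerivAt G A a)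
    (xstar : EuclideanSpace ℝ (Fin n)) (hxstar : G xstar = 0)
    (η K : ℝ) (hη0 : 0 ≤ η) (hη : η < 1 / 2) (hK : 1 ≤ K)
    (σ : ℝ) (hσ : σ = ‖A‖)
    (hcone : ‖G a - A (a - xstar)‖ ≤ η * ‖G a‖)
    (hlow : ‖A (a - xstar)‖ ^ 2 / (1 + η ^ 2) ≤ ‖G a‖ ^ 2)
    (hsv : (σ ^ 2 / K ^ 2) * ‖a - xstar‖ ^ 2 ≤ ‖A (a - xstar)‖ ^ 2)
    (u : EuclideanSpace ℝ (Fin n))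
    (hu : u = ContinuousLinearMap.adjoint A (G a)) (hune : u ≠ 0)
    (xplus : EuclideanSpace ℝ (Fin n))
    (hxplus : xplus = a - (‖G a‖ ^ 2 / ‖u‖ ^ 2) • u) :
    ‖xplus - xstar‖ ^ 2 ≤
      (1 - (1 - 2 * η) / ((1 + η ^ 2) * K ^ 2)) * ‖a - xstar‖ ^ 2 := by
  subst hσ hu hxplus
  rw [div_eq_mul_inv (1 - 2 * η), mul_inv]
  exact stmt14_general hη.le (by positivity) hcone
    (by linear_combination hlow + hsv / (1 + η ^ 2)) hune
end
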